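/- arXiv:1703.01581 — 3 statements merged into one kernel-verified Lean document; each statement's English description precedes it below -/
import Mathlib

section
/- Let ⟨yₙ⟩ₙ₌₁^∞ be a minimal sequence in ℕ and let A be a central* set in (ℕ, +). Then there exists a sum subsystem ⟨xₙ⟩ₙ₌₁^∞ of ⟨yₙ⟩ₙ₌₁^∞ such that FS(⟨xₙ⟩ₙ₌₁^∞) ∪ FP(⟨xₙ⟩ₙ₌₁^∞) ⊆ A. -/
/-- The semigroup operation `+` on ultrafilters: `A ∈ p + q` iff
`{x : {y : x + y ∈ A} ∈ q} ∈ p`. -/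
def uadd (p q : Ultrafilter ℕ) : Ultrafilter ℕ :=
  p.bind fun x => q.map fun y => x + y

/-- The ultrafilters on ℕ that live on the positive integers; these encode the
Stone–Čech compactification βℕ of the semigroup of positive integers. -/
def PosUlt : Set (Ultrafilter ℕ) := {p | {n : ℕ | 0 < n} ∈ p}

/-- `L` is a left ideal of `(βℕ, +)` (ℕ the positive integers). -/
def IsLeftIdeal (L : Set (Ultrafilter ℕ)) : Prop :=
  L.Nonempty ∧ L ⊆ PosUlt ∧ ∀ p ∈ PosUlt, ∀ q ∈ L, uadd p q ∈ L

/-- `L` is a minimal left ideal of `(βℕ, +)`. -/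
def IsMinimalLeftIdeal (L : Set (Ultrafilter ℕ)) : Prop :=
  IsLeftIdeal L ∧ ∀ L', IsLeftIdeal L' → L' ⊆ L → L' = L

/-- The smallest two-sided ideal `K(βℕ, +)`, i.e. the union of all minimal left ideals. -/
def K : Set (Ultrafilter ℕ) := {p | ∃ L, IsMinimalLeftIdeal L ∧ p ∈ L}

/-- Finite sums of distinct terms of the sequence `⟨xₙ⟩ₙ₌ₘ^∞`, i.e. over index sets
contained in `{m, m+1, …}`. -/
def FSfrom (x : ℕ → ℕ) (m : ℕ) : Set ℕ :=
  {s | ∃ H : Finset ℕ, H.Nonempty ∧ (∀ t ∈ H, m ≤ t) ∧ s = ∑ t ∈ H, x t}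

/-- Finite sums of distinct terms of a sequence. -/
def FS (x : ℕ → ℕ) : Set ℕ :=
  {s | ∃ H : Finset ℕ, H.Nonempty ∧ s = ∑ t ∈ H, x t}

/-- Finite products of distinct terms of a sequence. -/
def FP (x : ℕ → ℕ) : Set ℕ :=
  {s | ∃ H : Finset ℕ, H.Nonempty ∧ s = ∏ t ∈ H, x t}

/-- `x` is a sum subsystem of `y`. -/
def SumSubsystem (x y : ℕ → ℕ) : Prop :=
  ∃ H : ℕ → Finset ℕ, (∀ n, (H n).Nonempty) ∧
    (∀ n, ∀ i ∈ H n, ∀ j ∈ H (n + 1), i < j) ∧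
    (∀ n, x n = ∑ t ∈ H n, y t)

/-- `⟨yₙ⟩` is a minimal sequence: some `p ∈ K(βℕ, +)` contains `FS(⟨yₙ⟩ₙ₌ₘ^∞)`
for every `m`. -/
def MinimalSequence (y : ℕ → ℕ) : Prop :=
  ∃ p : Ultrafilter ℕ, p ∈ K ∧ ∀ m : ℕ, FSfrom y m ∈ p

/-- `A` is a central* set in `(ℕ, +)`: it belongs to every minimal idempotent,
i.e. every idempotent ultrafilter lying in `K(βℕ, +)`. -/
def CentralStar (A : Set ℕ) : Prop :=
  ∀ p : Ultrafilter ℕ, uadd p p = p → p ∈ K → A ∈ p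

/-!
By the Ellis–Numakura lemma, applied to `{u + p | u ∈ T}` with `T` the compact semigroup of all
ultrafilters containing every `FS(⟨yₙ⟩ₙ₌ₘ^∞)`, the ultrafilter `p` witnessing minimality of `y` may
be replaced by a minimal idempotent `q`. Dilation by `a > 0` is an endomorphism of `(βℕ, +)` that
preserves `K(βℕ, +)`, because every ultrafilter has a translate by a natural number that is itself
a dilate by `a`. Hence the image of `q` under each dilation is again a minimal idempotent, so
`{x | a * x ∈ A} ∈ q` for every `a > 0`. Now `xₙ` is chosen recursively in a `q`-large set:
idempotence of `q` takes care of the sums with earlier terms, as in the Galvin–Glazer proof of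
Hindman's theorem, and each of the finitely many products `a` of earlier terms imposes only the
`q`-large condition `a * xₙ ∈ A`.
-/

open Filter

attribute [local instance] Ultrafilter.addSemigroup

theorem uadd_eq_add (p q : Ultrafilter ℕ) : uadd p q = p + q :=
  rfl

section UltrafilterAdd

variable {M : Type*} [AddSemigroup M]

theorem mem_ultrafilter_add {p q : Ultrafilter M} {s : Set M} :
    s ∈ p + q ↔ {x | {y | x + y ∈ s} ∈ q} ∈ p :=
  Iff.rfl

theorem ultrafilter_map_add {N : Type*} [AddSemigroup N] (f : AddHom M N) (p q : Ultrafilter M) :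
    (p + q).map f = p.map f + q.map f := by
  ext s
  simp only [Ultrafilter.mem_map, mem_ultrafilter_add, Set.preimage, Set.mem_ofPred_eq, map_add]

theorem map_mul_left_ultrafilter_add {R : Type*} [NonUnitalNonAssocSemiring R] (a : R)
    (p q : Ultrafilter R) : (p + q).map (a * ·) = p.map (a * ·) + q.map (a * ·) :=
  ultrafilter_map_add (AddHom.mulLeft a) p q

/-- The set `A⋆` of Hindman and Strauss: the points `x ∈ A` whose translate `-x + A` is still
`q`-large. For an idempotent `q` it allows `q`-large conditions to be propagated along sums. -/
def starSet (q : Ultrafilter M) (A : Set M) : Set M :=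
  A ∩ {x | {z | x + z ∈ A} ∈ q}

theorem starSet_mem {q : Ultrafilter M} (hqq : q + q = q) {A : Set M} (hA : A ∈ q) :
    starSet q A ∈ q :=
  inter_mem hA (mem_ultrafilter_add.1 (hqq.symm ▸ hA))

theorem setOf_add_mem_starSet_mem {q : Ultrafilter M} (hqq : q + q = q) {A : Set M} {x : M}
    (hx : x ∈ starSet q A) : {z | x + z ∈ starSet q A} ∈ q := by
  filter_upwards [starSet_mem hqq hx.2] with z ⟨hz, hz'⟩
  refine ⟨hz, ?_⟩
  simpa only [Set.mem_ofPred_eq, add_assoc] using hz'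

end UltrafilterAdd

theorem mem_PosUlt_or_eq_pure_zero (p : Ultrafilter ℕ) : p ∈ PosUlt ∨ p = pure 0 := by
  refine (Ultrafilter.mem_or_compl_mem p {n | 0 < n}).imp_right fun h ↦ ?_
  have h0 : ({0} : Set ℕ) ∈ p := mem_of_superset h fun n hn ↦ Nat.eq_zero_of_not_pos hn
  obtain ⟨n, rfl, hp⟩ := Ultrafilter.eq_pure_of_finite_mem (Set.finite_singleton 0) h0
  exact hp

theorem pure_zero_add_ultrafilter (q : Ultrafilter ℕ) : pure 0 + q = q := by
  ext s
  simp only [mem_ultrafilter_add, Ultrafilter.mem_pure, Set.mem_ofPred_eq, zero_add,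
    Set.ofPred_mem_eq]

theorem add_mem_PosUlt (p : Ultrafilter ℕ) {q : Ultrafilter ℕ} (hq : q ∈ PosUlt) :
    p + q ∈ PosUlt :=
  univ_mem' fun x ↦ mem_of_superset hq fun _ hy ↦ Nat.add_pos_right x hy

theorem IsLeftIdeal.add_mem {L : Set (Ultrafilter ℕ)} (hL : IsLeftIdeal L) (p : Ultrafilter ℕ)
    {q : Ultrafilter ℕ} (hq : q ∈ L) : p + q ∈ L := by
  rcases mem_PosUlt_or_eq_pure_zero p with hp | rfl
  · exact hL.2.2 p hp q hq
  · rwa [pure_zero_add_ultrafilter]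

theorem isLeftIdeal_range_add {p : Ultrafilter ℕ} (hp : p ∈ PosUlt) :
    IsLeftIdeal (Set.range (· + p)) := by
  refine ⟨⟨p + p, p, rfl⟩, ?_, ?_⟩
  · rintro _ ⟨s, rfl⟩
    exact add_mem_PosUlt s hp
  · rintro t - _ ⟨s, rfl⟩
    exact ⟨t + s, add_assoc t s p⟩

theorem add_mem_K (r : Ultrafilter ℕ) {p : Ultrafilter ℕ} (hp : p ∈ K) : r + p ∈ K :=
  let ⟨L, hL, hpL⟩ := hp
  ⟨L, hL, hL.1.add_mem r hpL⟩

theorem mem_K_iff {p : Ultrafilter ℕ} :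
    p ∈ K ↔ p ∈ PosUlt ∧ ∀ r, ∃ s, s + (r + p) = p := by
  constructor
  · rintro ⟨L, ⟨hL, hmin⟩, hp⟩
    refine ⟨hL.2.1 hp, fun r ↦ ?_⟩
    have hrp : r + p ∈ L := hL.add_mem r hp
    have hrange : Set.range (· + (r + p)) = L := by
      refine hmin _ (isLeftIdeal_range_add (hL.2.1 hrp)) ?_
      rintro _ ⟨s, rfl⟩
      exact hL.add_mem s hrp
    rwa [← hrange] at hp
  · rintro ⟨hp, hrec⟩
    refine ⟨Set.range (· + p), ⟨isLeftIdeal_range_add hp, fun L hL hsub ↦ ?_⟩,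
      pure 0, pure_zero_add_ultrafilter p⟩
    obtain ⟨z, hz⟩ := hL.1
    obtain ⟨r, rfl⟩ := hsub hz
    obtain ⟨s, hs⟩ := hrec r
    have hpL : p ∈ L := hs ▸ hL.add_mem s hz
    refine hsub.antisymm ?_
    rintro _ ⟨t, rfl⟩
    exact hL.add_mem t hpL

theorem exists_map_mul_left_eq_pure_add {n : ℕ} (hn : 0 < n) (r : Ultrafilter ℕ) :
    ∃ (j : ℕ) (s : Ultrafilter ℕ), s.map (n * ·) = pure j + r := by
  have hfin : Set.Iic n ∈ r.map fun x ↦ n - x % n :=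
    Ultrafilter.mem_map.2 (univ_mem' fun x ↦ Nat.sub_le n (x % n))
  obtain ⟨j, -, hj⟩ := Ultrafilter.eq_pure_of_finite_mem (Set.finite_Iic n) hfin
  have hmod : ∀ᶠ x in r, n - x % n = j :=
    Ultrafilter.mem_map.1 (hj ▸ Ultrafilter.mem_pure.2 (Set.mem_singleton j))
  have hdvd : ∀ᶠ x in r, n * ((j + x) / n) = j + x := by
    filter_upwards [hmod] with x hx
    refine Nat.mul_div_cancel' ⟨1 + x / n, ?_⟩
    have := Nat.mod_lt x hn
    have := Nat.mod_add_div x n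
    rw [mul_add]
    omega
  refine ⟨j, r.map fun x ↦ (j + x) / n, ?_⟩
  rw [Ultrafilter.map_map]
  exact Ultrafilter.coe_injective (map_congr hdvd)

theorem map_mul_left_mem_K {n : ℕ} (hn : 0 < n) {q : Ultrafilter ℕ} (hq : q ∈ K) :
    q.map (n * ·) ∈ K := by
  rw [mem_K_iff] at hq ⊢
  refine ⟨mem_of_superset hq.1 fun x hx ↦ Nat.mul_pos hn hx, fun r ↦ ?_⟩
  obtain ⟨j, s, hs⟩ := exists_map_mul_left_eq_pure_add hn r
  obtain ⟨t, ht⟩ := hq.2 s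
  refine ⟨t.map (n * ·) + pure j, ?_⟩
  calc t.map (n * ·) + pure j + (r + q.map (n * ·))
      = t.map (n * ·) + (pure j + r + q.map (n * ·)) := by simp only [add_assoc]
    _ = (t + (s + q)).map (n * ·) := by
        rw [← hs, map_mul_left_ultrafilter_add, map_mul_left_ultrafilter_add]
    _ = q.map (n * ·) := by rw [ht]

theorem exists_idempotent_mem_K_of_isCompact {S : Set (Ultrafilter ℕ)} (hS : IsCompact S)
    (hadd : ∀ u ∈ S, ∀ v ∈ S, u + v ∈ S) {p : Ultrafilter ℕ} (hpS : p ∈ S) (hpK : p ∈ K) :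
    ∃ q ∈ S, q + q = q ∧ q ∈ K := by
  obtain ⟨_, ⟨u, hu, rfl⟩, hidem⟩ := exists_idempotent_in_compact_add_subsemigroup
    Ultrafilter.continuous_add_left ((· + p) '' S) (Set.Nonempty.image _ ⟨p, hpS⟩)
    (hS.image (Ultrafilter.continuous_add_left p)) (by
      rintro _ ⟨u, hu, rfl⟩ _ ⟨v, hv, rfl⟩
      exact ⟨u + p + v, hadd _ (hadd u hu p hpS) v hv, add_assoc (u + p) v p⟩)
  exact ⟨u + p, hadd u hu p hpS, hidem, add_mem_K u hpK⟩

theorem exists_forall_add_mem_FSfrom {y : ℕ → ℕ} {m a : ℕ} (ha : a ∈ FSfrom y m) :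
    ∃ k, ∀ b ∈ FSfrom y k, a + b ∈ FSfrom y m := by
  obtain ⟨H, hH, hmH, rfl⟩ := ha
  refine ⟨max m (H.sup id + 1), ?_⟩
  rintro _ ⟨G, -, hG, rfl⟩
  have hmG : ∀ t ∈ G, m ≤ t := fun t ht ↦ (le_max_left _ _).trans (hG t ht)
  have hHG : Disjoint H G := Finset.disjoint_left.2 fun t htH htG ↦
    ((le_max_right _ _).trans (hG t htG)).not_gt (Nat.lt_succ_of_le (Finset.le_sup (f := id) htH))
  exact ⟨H ∪ G, hH.mono Finset.subset_union_left,
    fun t ht ↦ (Finset.mem_union.1 ht).elim (hmH t) (hmG t), (Finset.sum_union hHG).symm⟩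

theorem FSfrom_mem_add {y : ℕ → ℕ} {u v : Ultrafilter ℕ} (hu : ∀ m, FSfrom y m ∈ u)
    (hv : ∀ m, FSfrom y m ∈ v) (m : ℕ) : FSfrom y m ∈ u + v := by
  rw [mem_ultrafilter_add]
  filter_upwards [hu m] with a ha
  obtain ⟨k, hk⟩ := exists_forall_add_mem_FSfrom ha
  exact mem_of_superset (hv k) hk

theorem MinimalSequence.exists_idempotent_mem_K {y : ℕ → ℕ} (hy : MinimalSequence y) :
    ∃ q : Ultrafilter ℕ, q + q = q ∧ q ∈ K ∧ ∀ m, FSfrom y m ∈ q := by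
  obtain ⟨p, hpK, hp⟩ := hy
  have hclosed : IsClosed {u : Ultrafilter ℕ | ∀ m, FSfrom y m ∈ u} := by
    simp only [Set.ofPred_forall]
    exact isClosed_iInter fun m ↦ ultrafilter_isClosed_basic _
  obtain ⟨q, hq, hqq, hqK⟩ := exists_idempotent_mem_K_of_isCompact hclosed.isCompact
    (fun u hu v hv ↦ FSfrom_mem_add hu hv) hp hpK
  exact ⟨q, hqq, hqK, hq⟩

theorem exists_seq_forall_map_range {α : Type*} {r : Multiset α → α → Prop}
    (h : ∀ s, ∃ a, r s a) : ∃ f : ℕ → α, ∀ n, r ((Multiset.range n).map f) (f n) := by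
  choose g hg using h
  let s : ℕ → Multiset α := Nat.rec 0 fun _ t ↦ g t ::ₘ t
  have hs (n : ℕ) : s n = (Multiset.range n).map fun i ↦ g (s i) := by
    induction n with
    | zero => rfl
    | succ n ih => rw [Multiset.range_succ, Multiset.map_cons, ← ih]
  exact ⟨fun n ↦ g (s n), fun n ↦ hs n ▸ hg (s n)⟩

theorem exists_sumSubsystem_forall_mem {y : ℕ → ℕ} {q : Ultrafilter ℕ}
    (hq : ∀ m, FSfrom y m ∈ q) {D : Multiset ℕ → Set ℕ} (hD : ∀ s, D s ∈ q) :
    ∃ x, SumSubsystem x y ∧ ∀ n, x n ∈ D ((Multiset.range n).map x) := by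
  have hnext (s : Multiset (Finset ℕ)) : ∃ G : Finset ℕ, G.Nonempty ∧
      (∀ H ∈ s, ∀ i ∈ H, ∀ j ∈ G, i < j) ∧
      ∑ t ∈ G, y t ∈ D (s.map fun H ↦ ∑ t ∈ H, y t) := by
    obtain ⟨_, ⟨G, hG, hsG, rfl⟩, hGD⟩ :=
      q.nonempty_of_mem (inter_mem (hq (s.sup.sup id + 1)) (hD (s.map fun H ↦ ∑ t ∈ H, y t)))
    refine ⟨G, hG, fun H hH i hi j hj ↦ ?_, hGD⟩
    exact (Finset.le_sup (f := id) (Multiset.le_sup hH hi)).trans_lt (hsG j hj)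
  obtain ⟨H, hH⟩ := exists_seq_forall_map_range hnext
  refine ⟨fun n ↦ ∑ t ∈ H n, y t, ⟨H, fun n ↦ (hH n).1, fun n ↦ ?_, fun _ ↦ rfl⟩, fun n ↦ ?_⟩
  · exact (hH (n + 1)).2.1 (H n) (Multiset.mem_map_of_mem H (Multiset.mem_range.2 n.lt_succ_self))
  · simpa only [Multiset.map_map, Function.comp_def] using (hH n).2.2

theorem SumSubsystem.pos {x y : ℕ → ℕ} (hxy : SumSubsystem x y) (hy : ∀ n, 0 < y n) (n : ℕ) :
    0 < x n := by
  obtain ⟨H, hne, -, hx⟩ := hxy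
  exact hx n ▸ Finset.sum_pos (fun t _ ↦ hy t) (hne n)

theorem FS_subset_of_forall_add_mem {x : ℕ → ℕ} {B : Set ℕ}
    (h : ∀ n, ∀ F ⊆ Finset.range n, ∑ t ∈ F, x t ∈ insert 0 B → ∑ t ∈ F, x t + x n ∈ B) :
    FS x ⊆ B := by
  have hsum (F : Finset ℕ) : F = ∅ ∨ ∑ t ∈ F, x t ∈ B := by
    induction F using Finset.induction_on_max with
    | empty => exact Or.inl rfl
    | insert a F ha ih =>
      right
      rw [Finset.sum_insert fun haF ↦ (ha a haF).false, add_comm]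
      refine h a F (fun t ht ↦ Finset.mem_range.2 (ha t ht)) ?_
      exact ih.imp_left fun hF ↦ by rw [hF, Finset.sum_empty]
  rintro _ ⟨F, hF, rfl⟩
  exact (hsum F).resolve_left hF.ne_empty

theorem FP_subset_of_forall_mul_mem {x : ℕ → ℕ} {B : Set ℕ}
    (h : ∀ n, ∀ F ⊆ Finset.range n, (∏ t ∈ F, x t) * x n ∈ B) : FP x ⊆ B := by
  rintro _ ⟨F, hF, rfl⟩
  rw [← Finset.prod_erase_mul F x (F.max'_mem hF)]
  exact h _ _ fun t ht ↦ Finset.mem_range.2 (Finset.lt_max'_of_mem_erase_max' F hF ht)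

theorem exists_sumSubsystem_FS_union_FP_subset {y : ℕ → ℕ} (hy : ∀ n, 0 < y n)
    {q : Ultrafilter ℕ} (hqq : q + q = q) (hq : ∀ m, FSfrom y m ∈ q) {A : Set ℕ}
    (hA : ∀ a, 0 < a → {x | a * x ∈ A} ∈ q) :
    ∃ x, SumSubsystem x y ∧ FS x ∪ FP x ⊆ A := by
  have hAq : A ∈ q := by simpa only [one_mul, Set.ofPred_mem_eq] using hA 1 one_pos
  have hadd (s : ℕ) : ∀ᶠ z in q, s ∈ insert 0 (starSet q A) → s + z ∈ starSet q A := by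
    rw [eventually_imp_distrib_left]
    rintro (rfl | hs)
    · simp only [zero_add]
      exact starSet_mem hqq hAq
    · exact setOf_add_mem_starSet_mem hqq hs
  have hmul (c : ℕ) : ∀ᶠ z in q, 0 < c → c * z ∈ A := eventually_imp_distrib_left.2 (hA c)
  have hlarge (s : Multiset ℕ) : ∀ᶠ z in q, ∀ t ∈ s.powerset.toFinset,
      (t.sum ∈ insert 0 (starSet q A) → t.sum + z ∈ starSet q A) ∧ (0 < t.prod → t.prod * z ∈ A) :=
    (eventually_all_finset _).2 fun t _ ↦ (hadd t.sum).and (hmul t.prod)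
  obtain ⟨x, hxy, hx⟩ := exists_sumSubsystem_forall_mem hq hlarge
  have hF {n : ℕ} {F : Finset ℕ} (hFn : F ⊆ Finset.range n) :
      F.val.map x ∈ ((Multiset.range n).map x).powerset.toFinset :=
    Multiset.mem_toFinset.2 (Multiset.mem_powerset.2
      (Multiset.map_le_map (Finset.val_le_iff.2 hFn)))
  refine ⟨x, hxy, Set.union_subset ?_ ?_⟩
  · exact (FS_subset_of_forall_add_mem fun n F hFn ↦ (hx n _ (hF hFn)).1).trans
      Set.inter_subset_left
  · exact FP_subset_of_forall_mul_mem fun n F hFn ↦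
      (hx n _ (hF hFn)).2 (Finset.prod_pos fun t _ ↦ hxy.pos hy t)

/-- For every minimal sequence `⟨yₙ⟩` in the positive integers and every
central* set `A` in `(ℕ, +)`, there is a sum subsystem `⟨xₙ⟩` of `⟨yₙ⟩` with
`FS(⟨xₙ⟩) ∪ FP(⟨xₙ⟩) ⊆ A`. -/
theorem centralstar_sum_subsystem (y : ℕ → ℕ) (hy : ∀ n, 0 < y n)
    (hmin : MinimalSequence y) (A : Set ℕ) (hA : CentralStar A) :
    ∃ x : ℕ → ℕ, SumSubsystem x y ∧ FS x ∪ FP x ⊆ A := by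
  obtain ⟨q, hqq, hqK, hq⟩ := hmin.exists_idempotent_mem_K
  refine exists_sumSubsystem_FS_union_FP_subset hy hqq hq fun a ha ↦ ?_
  refine hA (q.map (a * ·)) ?_ (map_mul_left_mem_K ha hqK)
  rw [uadd_eq_add, ← map_mul_left_ultrafilter_add, hqq]
end

section
/- Let S be a dense subsemigroup of ((0, ∞), +) and let A be a (finite or infinite) matrix with entries from ℚ and finitely many nonzero entries in each row. Then the set I(A) = {p ∈ 0⁺(S) : for every P ∈ p there exists x⃗ with entries from S such that all entries of Ax⃗ are in P} is a closed (hence compact) subset of the space of ultrafilters on S, and I(A) ≠ ∅ if and only if A is image partition regular near 0 over S. -/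
/-- `0⁺(S)`: the ultrafilters `p` on `S` with `(0, r) ∩ S ∈ p` for every `r > 0`. -/
def zeroPlus (S : Set ℝ) : Set (Ultrafilter S) :=
  {p | ∀ r : ℝ, 0 < r → {s : S | (s : ℝ) < r} ∈ p}

/-- `A` (a matrix over ℚ with rows indexed by `ι`, columns by `κ`, and finitely many
nonzero entries in each row) is image partition regular near 0 over `S`. -/
def IPRNearZero {ι κ : Type} (S : Set ℝ) (A : ι → κ → ℚ) : Prop :=
  ∀ (r : ℕ) (E : Fin r → Set ℝ), (∀ i, E i ⊆ S) → (∀ s ∈ S, ∃ i, s ∈ E i) →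
    ∀ ε > (0 : ℝ),
      ∃ (i : Fin r) (x : κ → ℝ), (∀ j, x j ∈ S) ∧
        ∀ a : ι, (∑ᶠ j, (A a j : ℝ) * x j) ∈ E i ∩ Set.Ioo 0 ε

/-- `I(A) = {p ∈ 0⁺(S) : for every P ∈ p there is x⃗ with entries from S such that all
entries of Ax⃗ are in P}`. -/
def IA {ι κ : Type} (S : Set ℝ) (A : ι → κ → ℚ) : Set (Ultrafilter S) :=
  {p | p ∈ zeroPlus S ∧ ∀ P ∈ p, ∃ x : κ → S,
    ∀ a : ι, ∃ s ∈ P, ((s : ℝ) = ∑ᶠ j, (A a j : ℝ) * (x j : ℝ))}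

/-! An ultrafilter `p ≤ F` contained in an upward closed family `𝓡` avoids every set outside `𝓡`.
Such a `p` exists as soon as the complements of the sets outside `𝓡` have the finite intersection
property together with `F`, and this is what partition regularity of `𝓡` along `F` says, in
complementary form. For a matrix `A`, take for `𝓡` the sets that contain all entries of some `Ax`,
and for `F` the trace on `S` of the neighbourhoods of `0`. -/

open Filter Set Topology

section PartitionRegularity

variable {X : Type*} {F : Filter X} {𝓡 : Set (Set X)}

/-- A family `𝓡` of sets is partition regular along a filter `F` if every finite cover of the space
has, for each `U ∈ F`, a cell whose trace on `U` belongs to `𝓡`. For `F = ⊤` and upward closed `𝓡`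
this is the classical notion. The cells need not be disjoint, and a cover is encoded as a set of
sets rather than as an indexed family. -/
def IsPartitionRegularAlong (F : Filter X) (𝓡 : Set (Set X)) : Prop :=
  ∀ T : Set (Set X), T.Finite → ⋃₀ T = univ → ∀ U ∈ F, ∃ E ∈ T, E ∩ U ∈ 𝓡

theorem isClosed_setOf_ultrafilter_le (F : Filter X) :
    IsClosed {p : Ultrafilter X | (p : Filter X) ≤ F} := by
  simp only [le_def, ofPred_forall]
  exact isClosed_biInter fun U _ => ultrafilter_isClosed_basic U

theorem isClosed_setOf_ultrafilter_forall_mem (𝓡 : Set (Set X)) :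
    IsClosed {p : Ultrafilter X | ∀ P ∈ p, P ∈ 𝓡} := by
  simp only [ofPred_forall]
  exact isClosed_iInter fun P => isClosed_imp (ultrafilter_isOpen_basic P) isClosed_const

theorem isPartitionRegularAlong_of_ultrafilter {p : Ultrafilter X} (hpF : (p : Filter X) ≤ F)
    (hp𝓡 : ∀ P ∈ p, P ∈ 𝓡) : IsPartitionRegularAlong F 𝓡 := by
  intro T hT hcover U hU
  have hTp : ⋃₀ T ∈ p := hcover ▸ univ_mem
  obtain ⟨E, hET, hEp⟩ := (Ultrafilter.finite_sUnion_mem_iff hT).1 hTp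
  exact ⟨E, hET, hp𝓡 _ (inter_mem hEp (hpF hU))⟩

theorem IsPartitionRegularAlong.inter_sInter_nonempty [NeBot F]
    (h : IsPartitionRegularAlong F 𝓡) (h𝓡 : IsUpperSet 𝓡) {U : Set X} (hU : U ∈ F)
    {T : Set (Set X)} (hT : T.Finite) (hT𝓡 : ∀ P ∈ T, Pᶜ ∉ 𝓡) : (U ∩ ⋂₀ T).Nonempty := by
  by_contra hempty
  have hcover : ⋃₀ insert Uᶜ (compl '' T) = univ := by
    rw [sUnion_insert, ← compl_sInter, ← compl_inter, not_nonempty_iff_eq_empty.1 hempty,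
      compl_empty]
  obtain ⟨E, rfl | ⟨P, hPT, rfl⟩, hE⟩ := h _ ((hT.image compl).insert Uᶜ) hcover U hU
  · rw [compl_inter_self] at hE
    have hTempty : T = ∅ := eq_empty_of_forall_notMem fun P hP =>
      hT𝓡 P hP (h𝓡 (empty_subset Pᶜ) hE)
    rw [hTempty, sInter_empty, inter_univ] at hempty
    exact hempty (nonempty_of_mem hU)
  · exact hT𝓡 P hPT (h𝓡 inter_subset_left hE)

theorem IsPartitionRegularAlong.exists_ultrafilter [NeBot F]
    (h : IsPartitionRegularAlong F 𝓡) (h𝓡 : IsUpperSet 𝓡) :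
    ∃ p : Ultrafilter X, (p : Filter X) ≤ F ∧ ∀ P ∈ p, P ∈ 𝓡 := by
  have hne : NeBot (F ⊓ generate {P | Pᶜ ∉ 𝓡}) := by
    refine inf_neBot_iff.2 fun U hU V hV => ?_
    obtain ⟨T, hT𝓡, hT, hTV⟩ := mem_generate_iff.1 hV
    exact (h.inter_sInter_nonempty h𝓡 hU hT hT𝓡).mono (inter_subset_inter_right U hTV)
  obtain ⟨p, hp⟩ := Ultrafilter.exists_le (F ⊓ generate {P | Pᶜ ∉ 𝓡})
  obtain ⟨hpF, hpgen⟩ := le_inf_iff.1 hp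
  refine ⟨p, hpF, fun P hP => ?_⟩
  by_contra hP𝓡
  have hPc : Pᶜ ∈ p := hpgen (mem_generate_of_mem (by rwa [mem_ofPred_eq, compl_compl]))
  exact Ultrafilter.compl_mem_iff_notMem.1 hPc hP

theorem exists_ultrafilter_iff_isPartitionRegularAlong [NeBot F] (h𝓡 : IsUpperSet 𝓡) :
    (∃ p : Ultrafilter X, (p : Filter X) ≤ F ∧ ∀ P ∈ p, P ∈ 𝓡) ↔ IsPartitionRegularAlong F 𝓡 :=
  ⟨fun ⟨_, hpF, hp𝓡⟩ => isPartitionRegularAlong_of_ultrafilter hpF hp𝓡,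
    fun h => h.exists_ultrafilter h𝓡⟩

end PartitionRegularity

section ImagesNearZero

variable {S : Set ℝ}

theorem hasBasis_comap_nhds_zero (hSpos : S ⊆ Ioi 0) :
    (comap ((↑) : S → ℝ) (𝓝 0)).HasBasis (fun r : ℝ => 0 < r) fun r => {s : S | (s : ℝ) < r} := by
  refine (nhds_basis_Ioo_pos (0 : ℝ)).comap _ |>.congr (fun _ => Iff.rfl) fun r hr => ?_
  ext s
  have hs : (0 : ℝ) < s := hSpos s.2
  simp only [mem_preimage, mem_Ioo, zero_sub, zero_add, mem_ofPred_eq]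
  exact and_iff_right ((neg_neg_of_pos hr).trans hs)

theorem mem_zeroPlus_iff (hSpos : S ⊆ Ioi 0) {p : Ultrafilter S} :
    p ∈ zeroPlus S ↔ (p : Filter S) ≤ comap (↑) (𝓝 (0 : ℝ)) :=
  (hasBasis_comap_nhds_zero hSpos).ge_iff.symm

/-- The subsets of `S` that contain all entries of `Ax` for some vector `x` with entries from `S`.
Entries of `Ax` are real numbers, so membership in `P : Set S` is stated through the coercion. -/
def setsContainingImage {ι κ : Type*} (S : Set ℝ) (A : ι → κ → ℚ) : Set (Set S) :=
  {P | ∃ x : κ → S, ∀ a : ι, ∃ s ∈ P, (s : ℝ) = ∑ᶠ j, (A a j : ℝ) * (x j : ℝ)}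

theorem isUpperSet_setsContainingImage {ι κ : Type*} (S : Set ℝ) (A : ι → κ → ℚ) :
    IsUpperSet (setsContainingImage S A) := fun _ _ hPQ ⟨x, hx⟩ =>
  ⟨x, fun a => (hx a).imp fun _ => And.imp_left fun hs => hPQ hs⟩

variable {ι κ : Type} {A : ι → κ → ℚ}

theorem IA_eq_inter (hSpos : S ⊆ Ioi 0) :
    IA S A = {p : Ultrafilter S | (p : Filter S) ≤ comap (↑) (𝓝 (0 : ℝ))} ∩
      {p | ∀ P ∈ p, P ∈ setsContainingImage S A} :=
  ext fun _ => and_congr_left' (mem_zeroPlus_iff hSpos)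

theorem IPRNearZero.isPartitionRegularAlong (hSpos : S ⊆ Ioi 0) (h : IPRNearZero S A) :
    IsPartitionRegularAlong (comap ((↑) : S → ℝ) (𝓝 0)) (setsContainingImage S A) := by
  intro T hT hcover U hU
  obtain ⟨ε, hε, hεU⟩ := (hasBasis_comap_nhds_zero hSpos).mem_iff.1 hU
  obtain ⟨r, E, -, rfl⟩ := hT.fin_param
  have hEcover : ∀ s ∈ S, ∃ i, s ∈ ((↑) '' E i : Set ℝ) := fun s hs => by
    obtain ⟨i, hi⟩ := mem_iUnion.1 (sUnion_range E ▸ hcover ▸ mem_univ (⟨s, hs⟩ : S))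
    exact ⟨i, mem_image_of_mem _ hi⟩
  obtain ⟨i, x, hxS, hx⟩ :=
    h r (fun i => (↑) '' E i) (fun i => Subtype.coe_image_subset S (E i)) hEcover ε hε
  refine ⟨E i, mem_range_self i, fun j => ⟨x j, hxS j⟩, fun a => ?_⟩
  obtain ⟨⟨s, hsE, hs⟩, -, hlt⟩ := hx a
  exact ⟨s, ⟨hsE, hεU (hs.trans_lt hlt)⟩, hs⟩

theorem iprNearZero_of_isPartitionRegularAlong (hSpos : S ⊆ Ioi 0)
    (h : IsPartitionRegularAlong (comap ((↑) : S → ℝ) (𝓝 0)) (setsContainingImage S A)) :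
    IPRNearZero S A := by
  intro r E _ hEcover ε hε
  have hcover : ⋃₀ range (fun i => ((↑) ⁻¹' E i : Set S)) = univ := by
    rw [sUnion_range]
    exact eq_univ_of_forall fun s => mem_iUnion.2 (hEcover s s.2)
  obtain ⟨_, ⟨i, rfl⟩, x, hx⟩ :=
    h _ (finite_range _) hcover _ ((hasBasis_comap_nhds_zero hSpos).mem_of_mem hε)
  refine ⟨i, fun j => x j, fun j => (x j).2, fun a => ?_⟩
  obtain ⟨s, ⟨hsE, hsε⟩, hs⟩ := hx a
  exact hs ▸ ⟨hsE, hSpos s.2, hsε⟩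

theorem iprNearZero_iff_isPartitionRegularAlong (hSpos : S ⊆ Ioi 0) :
    IPRNearZero S A ↔
      IsPartitionRegularAlong (comap ((↑) : S → ℝ) (𝓝 0)) (setsContainingImage S A) :=
  ⟨fun h => h.isPartitionRegularAlong hSpos, iprNearZero_of_isPartitionRegularAlong hSpos⟩

end ImagesNearZero

theorem zero_mem_closure_of_dense_pos {S : Set ℝ}
    (hSdense : ∀ x ∈ Ioi (0 : ℝ), ∀ ε > 0, ∃ s ∈ S, |x - s| < ε) : (0 : ℝ) ∈ closure S := by
  have hsub : Ioi 0 ⊆ closure S := fun x hx => Metric.mem_closure_iff.2 (hSdense x hx)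
  refine closure_minimal hsub isClosed_closure ?_
  rw [closure_Ioi]
  exact self_mem_Ici

theorem IA_closed_and_nonempty_iff_general {S : Set ℝ} (hSpos : S ⊆ Ioi 0)
    (hS0 : (0 : ℝ) ∈ closure S) {ι κ : Type} (A : ι → κ → ℚ)
    (_hrow : ∀ a : ι, {j | A a j ≠ 0}.Finite) :
    IsClosed (IA S A) ∧ IsCompact (IA S A) ∧ ((IA S A).Nonempty ↔ IPRNearZero S A) := by
  have hclosed : IsClosed (IA S A) := by
    rw [IA_eq_inter hSpos]
    exact (isClosed_setOf_ultrafilter_le _).inter (isClosed_setOf_ultrafilter_forall_mem _)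
  have : NeBot (comap ((↑) : S → ℝ) (𝓝 0)) := mem_closure_iff_comap_neBot.1 hS0
  refine ⟨hclosed, hclosed.isCompact, ?_⟩
  rw [IA_eq_inter hSpos, iprNearZero_iff_isPartitionRegularAlong hSpos]
  exact exists_ultrafilter_iff_isPartitionRegularAlong (isUpperSet_setsContainingImage S A)

/-- For a dense subsemigroup `S` of `((0, ∞), +)` and a (finite or
infinite) matrix `A` over ℚ with finitely many nonzero entries in each row, the set
`I(A)` is closed (hence compact) in `βS_d`, and `I(A) ≠ ∅` iff `A` is image partition
regular near 0 over `S`. -/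
theorem IA_closed_and_nonempty_iff (S : Set ℝ)
    (hSpos : S ⊆ Set.Ioi 0)
    (hSadd : ∀ a ∈ S, ∀ b ∈ S, a + b ∈ S)
    (hSdense : ∀ x ∈ Set.Ioi (0 : ℝ), ∀ ε > 0, ∃ s ∈ S, |x - s| < ε)
    (ι κ : Type) (A : ι → κ → ℚ) (hrow : ∀ a : ι, {j | A a j ≠ 0}.Finite) :
    IsClosed (IA S A) ∧ IsCompact (IA S A) ∧
      ((IA S A).Nonempty ↔ IPRNearZero S A) :=
  IA_closed_and_nonempty_iff_general hSpos (zero_mem_closure_of_dense_pos hSdense) A hrow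
end

section
/- Let S be a dense subsemigroup of ((0, ∞), +) that is also closed under multiplication, and let A be a (finite or infinite) matrix with entries from ℚ and finitely many nonzero entries in each row, which is image partition regular near 0 over S. Then I(A) = {p ∈ 0⁺(S) : for every P ∈ p there exists x⃗ with entries from S such that all entries of Ax⃗ are in P} is a left ideal of (0⁺(S), ·): for every p ∈ 0⁺(S) and q ∈ I(A), p · q ∈ I(A). -/
/-- The semigroup operation `·` on the ultrafilters `βS_d` on `S ⊆ ℝ`:
`B ∈ p · q` iff `{x ∈ S : {y ∈ S : x · y ∈ B} ∈ q} ∈ p`. -/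
def umulS (S : Set ℝ) (hS : ∀ a ∈ S, ∀ b ∈ S, a * b ∈ S)
    (p q : Ultrafilter S) : Ultrafilter S :=
  p.bind fun x => q.map fun y => (⟨x.1 * y.1, hS x.1 x.2 y.1 y.2⟩ : S)

/-!
If `P ∈ p · q`, then `{y | c * y ∈ P} ∈ q` for some `c ∈ S`. An image `A x` inside that set yields
the image `A (c x) = c (A x)` inside `P`.
-/

section Image

variable {R ι κ : Type*} [NonUnitalCommSemiring R]

theorem mul_finsum_mul_left_comm {a : κ → R} (ha : a.HasFiniteSupport) (c : R) (x : κ → R) :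
    c * ∑ᶠ j, a j * x j = ∑ᶠ j, a j * (c * x j) :=
  calc c * ∑ᶠ j, a j * x j = ∑ᶠ j, c * (a j * x j) := mul_finsum' _ c (ha.mul_left x)
    _ = ∑ᶠ j, a j * (c * x j) := finsum_congr fun j => mul_left_comm c (a j) (x j)

/-- `P` contains all entries of `A x` for some vector `x` with entries from `S`. This is the
condition that `I(A)` imposes on the members of an ultrafilter. -/
def ContainsImage {S : Set R} (A : ι → κ → R) (P : Set S) : Prop :=
  ∃ x : κ → S, ∀ a : ι, ∃ s ∈ P, (s : R) = ∑ᶠ j, A a j * (x j : R)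

theorem ContainsImage.of_mul_left_preimage {S : Set R} (hS : ∀ a ∈ S, ∀ b ∈ S, a * b ∈ S)
    {A : ι → κ → R} (hA : ∀ a, (A a).HasFiniteSupport) {P : Set S} (c : S)
    (h : ContainsImage A {y : S | (⟨c * y, hS c c.2 y y.2⟩ : S) ∈ P}) :
    ContainsImage A P := by
  obtain ⟨x, hx⟩ := h
  refine ⟨fun j => ⟨c * x j, hS c c.2 (x j) (x j).2⟩, fun a => ?_⟩
  obtain ⟨s, hcs, hs⟩ := hx a
  exact ⟨_, hcs, (congrArg (c.1 * ·) hs).trans (mul_finsum_mul_left_comm (hA a) _ _)⟩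

end Image

section Ultrafilter

variable {S : Set ℝ} {p q : Ultrafilter S}

theorem mem_umulS (hS : ∀ a ∈ S, ∀ b ∈ S, a * b ∈ S) {B : Set S} :
    B ∈ umulS S hS p q ↔
      {x : S | {y : S | (⟨x * y, hS x x.2 y y.2⟩ : S) ∈ B} ∈ q} ∈ p :=
  Iff.rfl

theorem mem_IA {ι κ : Type} {A : ι → κ → ℚ} :
    q ∈ IA S A ↔ q ∈ zeroPlus S ∧ ∀ P ∈ q, ContainsImage (fun a j => (A a j : ℝ)) P :=
  Iff.rfl

theorem umulS_mem_zeroPlus (hS₀ : S ⊆ Set.Ici 0) (hS : ∀ a ∈ S, ∀ b ∈ S, a * b ∈ S)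
    {M : ℝ} (hp : {s : S | (s : ℝ) < M} ∈ p) (hq : q ∈ zeroPlus S) :
    umulS S hS p q ∈ zeroPlus S := by
  intro r hr
  obtain ⟨s, hs⟩ := p.nonempty_of_mem hp
  have hM : 0 < M := (hS₀ s.2).trans_lt hs
  rw [mem_umulS]
  filter_upwards [hp] with x hx
  filter_upwards [hq (r / M) (div_pos hr hM)] with y hy
  calc (x : ℝ) * y ≤ M * y := mul_le_mul_of_nonneg_right (le_of_lt hx) (hS₀ y.2)
    _ < r := (lt_div_iff₀' hM).mp hy

theorem containsImage_of_mem_umulS (hS : ∀ a ∈ S, ∀ b ∈ S, a * b ∈ S) {ι κ : Type*}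
    {A : ι → κ → ℝ} (hA : ∀ a, (A a).HasFiniteSupport) (hq : ∀ P ∈ q, ContainsImage A P)
    {P : Set S} (hP : P ∈ umulS S hS p q) : ContainsImage A P := by
  obtain ⟨c, hc⟩ := p.nonempty_of_mem ((mem_umulS hS).mp hP)
  exact .of_mul_left_preimage hS hA c (hq _ hc)

theorem IA_left_ideal_general (hS₀ : S ⊆ Set.Ici 0) (hS : ∀ a ∈ S, ∀ b ∈ S, a * b ∈ S)
    {ι κ : Type} {A : ι → κ → ℚ} (hrow : ∀ a : ι, {j | A a j ≠ 0}.Finite)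
    {M : ℝ} (hp : {s : S | (s : ℝ) < M} ∈ p) (hq : q ∈ IA S A) :
    umulS S hS p q ∈ IA S A := by
  obtain ⟨hq₀, hqA⟩ := mem_IA.mp hq
  have hsupp (a : ι) : (fun j => (A a j : ℝ)).HasFiniteSupport :=
    (hrow a).subset fun _ => Rat.cast_ne_zero.mp
  exact mem_IA.mpr ⟨umulS_mem_zeroPlus hS₀ hS hp hq₀,
    fun _ => containsImage_of_mem_umulS hS hsupp hqA⟩

end Ultrafilter

/-- For a dense multiplicatively closed subsemigroup `S` of `((0, ∞), +)`
and a (finite or infinite) row-finite matrix `A` over ℚ that is image partition regular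
near 0 over `S`, the set `I(A)` is a left ideal of `(0⁺(S), ·)`. -/
theorem IA_left_ideal (S : Set ℝ)
    (hSpos : S ⊆ Set.Ioi 0)
    (hSadd : ∀ a ∈ S, ∀ b ∈ S, a + b ∈ S)
    (hSmul : ∀ a ∈ S, ∀ b ∈ S, a * b ∈ S)
    (hSdense : ∀ x ∈ Set.Ioi (0 : ℝ), ∀ ε > 0, ∃ s ∈ S, |x - s| < ε)
    (ι κ : Type) (A : ι → κ → ℚ) (hrow : ∀ a : ι, {j | A a j ≠ 0}.Finite)
    (hA : IPRNearZero S A) :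
    ∀ p ∈ zeroPlus S, ∀ q ∈ IA S A, umulS S hSmul p q ∈ IA S A :=
  fun _ hp _ hq =>
    IA_left_ideal_general (hSpos.trans Set.Ioi_subset_Ici_self) hSmul hrow (hp 1 one_pos) hq
end
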